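/- Let K be a positive semiring, let U be a finite set of attributes each of whose domains has at least two elements, let F be a set of functional dependencies between subsets of U, and let X and Y be subsets of U with X ∪ Y = U. The following statements are equivalent: (a) F logically implies X ∩ Y → X ∖ Y or F logically implies X ∩ Y → Y ∖ X; (b) for every K-relation R over U whose support R' satisfies every functional dependency in F, the decomposition of R along X and Y is lossless-join, i.e., R ≡ R[X] ⋈ R[Y]. -/

import Mathlib

open Finsupp

variable {A : Type*} [DecidableEq A]

/-- An `X`-tuple: a function assigning to each attribute `a ∈ X` an element of its domain. -/
def Tup (dom : A → Type*) (X : Finset A) : Type _ := ∀ a ∈ X, dom a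

/-- Projection (restriction) of an `X`-tuple to `Y ⊆ X`. -/
def restr (dom : A → Type*) {X Y : Finset A} (h : Y ⊆ X) (t : Tup dom X) : Tup dom Y :=
  fun a ha => t a (h ha)

/-- The marginal `R[Y]` of a `K`-relation `R` over `X`, for `Y ⊆ X`. -/
noncomputable def marg {dom : A → Type*} {K : Type*} [AddCommMonoid K] {X Y : Finset A}
    (h : Y ⊆ X) (R : Tup dom X →₀ K) : Tup dom Y →₀ K :=
  Finsupp.mapDomain (restr dom h) R

/-- Equivalence up to normalization of two `K`-relations over the same attribute set. -/
def KEquiv {dom : A → Type*} {K : Type*} [MulZeroClass K] {X : Finset A}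
    (R S : Tup dom X →₀ K) : Prop :=
  ∃ a b : K, a ≠ 0 ∧ b ≠ 0 ∧ ∀ t, a * R t = b * S t

/-- Merge an `X`-tuple and a `Y`-tuple into an `X ∪ Y`-tuple (values from the first argument
on `X`). -/
def merge {dom : A → Type*} {X Y : Finset A} (r : Tup dom X) (s : Tup dom Y) :
    Tup dom (X ∪ Y) :=
  fun a ha => if h : a ∈ X then r a h else s a ((Finset.mem_union.mp ha).resolve_left h)

/-- The correcting factor `c_S(u) = ∏_{v ∈ S[Z]', v ≠ u} S[Z](v)`. -/
noncomputable def cFactor {dom : A → Type*} {K : Type*} [CommSemiring K] {Y Z : Finset A}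
    (h : Z ⊆ Y) (S : Tup dom Y →₀ K) (u : Tup dom Z) : K :=
  haveI := Classical.decEq (Tup dom Z)
  ∏ v ∈ (marg h S).support.erase u, (marg h S) v

/-- The join of a `K`-relation over `X` and a `K`-relation over `Y`:
`(R ⋈ S)(t) = R(t[X])·S(t[Y])·c_S(t[X ∩ Y])`. -/
noncomputable def kjoin {dom : A → Type*} {K : Type*} [CommSemiring K] {X Y : Finset A}
    (R : Tup dom X →₀ K) (S : Tup dom Y →₀ K) : Tup dom (X ∪ Y) →₀ K :=
  haveI := Classical.decEq (Tup dom (X ∪ Y))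
  Finsupp.onFinset ((R.support ×ˢ S.support).image fun p => merge p.1 p.2)
    (fun t => R (restr dom Finset.subset_union_left t) *
      S (restr dom Finset.subset_union_right t) *
      cFactor Finset.inter_subset_right S (restr dom Finset.inter_subset_union t))
    (by
      intro t ht
      have hR : R (restr dom Finset.subset_union_left t) ≠ 0 :=
        left_ne_zero_of_mul (left_ne_zero_of_mul ht)
      have hS : S (restr dom Finset.subset_union_right t) ≠ 0 :=
        right_ne_zero_of_mul (left_ne_zero_of_mul ht)
      refine Finset.mem_image.mpr ⟨(restr dom Finset.subset_union_left t,
        restr dom Finset.subset_union_right t),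
        Finset.mem_product.mpr ⟨Finsupp.mem_support_iff.mpr hR, Finsupp.mem_support_iff.mpr hS⟩,
        ?_⟩
      funext a ha
      by_cases h : a ∈ X <;> simp [merge, restr, h])

/-- Two `K`-relations (over possibly different attribute sets) are consistent if a single
`K`-relation over the union has marginals equivalent to each of them. -/
def Consistent {dom : A → Type*} {K : Type*} [CommSemiring K] {X Y : Finset A}
    (R : Tup dom X →₀ K) (S : Tup dom Y →₀ K) : Prop :=
  ∃ T : Tup dom (X ∪ Y) →₀ K,
    KEquiv (marg Finset.subset_union_left T) R ∧ KEquiv (marg Finset.subset_union_right T) S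


/-- Two tuples over `U` agree on all attributes in `V`. -/
def agreeOn {A : Type*} [DecidableEq A] {dom : A → Type*} {U : Finset A} (V : Finset A)
    (t₁ t₂ : Tup dom U) : Prop :=
  ∀ a (ha : a ∈ U), a ∈ V → t₁ a ha = t₂ a ha

/-- An ordinary relation (a set of `U`-tuples) satisfies the functional dependency `V → W`
if any two of its tuples that agree on `V` also agree on `W`. -/
def SatisfiesFD {A : Type*} [DecidableEq A] {dom : A → Type*} {U : Finset A}
    (P : Finset (Tup dom U)) (V W : Finset A) : Prop :=
  ∀ t₁ ∈ P, ∀ t₂ ∈ P, agreeOn V t₁ t₂ → agreeOn W t₁ t₂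


theorem marg_apply' {dom : A → Type*} {K : Type*} [AddCommMonoid K] {X Y : Finset A}
    (h : Y ⊆ X) (R : Tup dom X →₀ K) (u : Tup dom Y) [DecidableEq (Tup dom Y)] :
    marg h R u = ∑ r ∈ R.support with restr dom h r = u, R r := by
  classical
  unfold marg Finsupp.mapDomain Finsupp.sum
  rw [Finsupp.finset_sum_apply, Finset.sum_filter]
  refine Finset.sum_congr rfl fun r _ => ?_
  rw [Finsupp.single_apply]

theorem sum_ne_zero_pos {ι K : Type*} [AddCommMonoid K]
    (hplus : ∀ a b : K, a + b = 0 → a = 0 ∧ b = 0) (s : Finset ι) (f : ι → K) (i : ι)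
    (hi : i ∈ s) (hf : f i ≠ 0) : ∑ j ∈ s, f j ≠ 0 := by
  classical
  intro h0
  rw [← Finset.add_sum_erase s f hi] at h0
  exact hf (hplus _ _ h0).1

theorem marg_ne_zero {dom : A → Type*} {K : Type*} [AddCommMonoid K]
    (hplus : ∀ a b : K, a + b = 0 → a = 0 ∧ b = 0) {X Y : Finset A}
    (h : Y ⊆ X) (R : Tup dom X →₀ K) (r : Tup dom X) (hr : R r ≠ 0) :
    marg h R (restr dom h r) ≠ 0 := by
  classical
  rw [marg_apply']
  exact sum_ne_zero_pos hplus _ _ r (by simp [hr]) hr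

theorem exists_of_marg_ne_zero {dom : A → Type*} {K : Type*} [AddCommMonoid K]
    {X Y : Finset A} (h : Y ⊆ X) (R : Tup dom X →₀ K) (u : Tup dom Y)
    (hu : marg h R u ≠ 0) : ∃ r ∈ R.support, restr dom h r = u := by
  classical
  rw [marg_apply'] at hu
  obtain ⟨r, hr, _⟩ := Finset.exists_ne_zero_of_sum_ne_zero hu
  rw [Finset.mem_filter] at hr
  exact ⟨r, hr.1, hr.2⟩

theorem marg_eq_self {dom : A → Type*} {K : Type*} [AddCommMonoid K]
    {X Y : Finset A} (h : Y ⊆ X) (R : Tup dom X →₀ K) (t : Tup dom X) (ht : t ∈ R.support)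
    (hu : ∀ r ∈ R.support, restr dom h r = restr dom h t → r = t) :
    marg h R (restr dom h t) = R t := by
  classical
  rw [marg_apply']
  have : (R.support.filter fun r => restr dom h r = restr dom h t) = {t} := by
    ext r
    simp only [Finset.mem_filter, Finset.mem_singleton]
    constructor
    · rintro ⟨h1, h2⟩
      exact hu r h1 h2
    · rintro rfl
      exact ⟨ht, rfl⟩
  rw [this, Finset.sum_singleton]

theorem marg_eq_marg {dom : A → Type*} {K : Type*} [AddCommMonoid K]
    {X Y Z : Finset A} (h : Y ⊆ X) (h' : Z ⊆ X) (R : Tup dom X →₀ K) (t : Tup dom X)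
    (hu : ∀ r ∈ R.support, restr dom h r = restr dom h t ↔ restr dom h' r = restr dom h' t) :
    marg h R (restr dom h t) = marg h' R (restr dom h' t) := by
  classical
  rw [marg_apply', marg_apply']
  refine Finset.sum_congr (Finset.filter_congr hu) fun _ _ => rfl

theorem marg_marg {dom : A → Type*} {K : Type*} [AddCommMonoid K]
    {X Y Z : Finset A} (h : Y ⊆ X) (h' : Z ⊆ Y) (R : Tup dom X →₀ K) :
    marg h' (marg h R) = marg (h'.trans h) R := by
  unfold marg
  rw [← Finsupp.mapDomain_comp]
  rfl

theorem restr_eq_iff {dom : A → Type*} {X Y : Finset A} (h : Y ⊆ X) (r t : Tup dom X) :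
    restr dom h r = restr dom h t ↔ agreeOn Y r t := by
  constructor
  · intro e a ha haY
    exact congrFun (congrFun e a) haY
  · intro e
    funext a ha
    exact e a (h ha) ha

theorem kjoin_apply {dom : A → Type*} {K : Type*} [CommSemiring K] {X Y : Finset A}
    (R : Tup dom X →₀ K) (S : Tup dom Y →₀ K) (t : Tup dom (X ∪ Y)) :
    kjoin R S t = R (restr dom Finset.subset_union_left t) *
      S (restr dom Finset.subset_union_right t) *
      cFactor Finset.inter_subset_right S (restr dom Finset.inter_subset_union t) := rfl

theorem cFactor_ne_zero {dom : A → Type*} {K : Type*} [CommSemiring K] [Nontrivial K]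
    [NoZeroDivisors K] {Y Z : Finset A}
    (h : Z ⊆ Y) (S : Tup dom Y →₀ K) (u : Tup dom Z) : cFactor h S u ≠ 0 := by
  classical
  unfold cFactor
  rw [Finset.prod_ne_zero_iff]
  intro v hv
  exact Finsupp.mem_support_iff.mp (Finset.mem_of_mem_erase hv)

theorem mul_cFactor {dom : A → Type*} {K : Type*} [CommSemiring K]
    {Y Z : Finset A} (h : Z ⊆ Y) (S : Tup dom Y →₀ K) (u : Tup dom Z) (hu : marg h S u ≠ 0) :
    marg h S u * cFactor h S u = ∏ v ∈ (marg h S).support, marg h S v := by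
  unfold cFactor
  exact @Finset.mul_prod_erase _ _ _ (Classical.decEq _) _ _ _ (Finsupp.mem_support_iff.mpr hu)

theorem lossless_of_fd {dom : A → Type*} {K : Type*} [CommSemiring K] [Nontrivial K]
    [NoZeroDivisors K] (hplus : ∀ a b : K, a + b = 0 → a = 0 ∧ b = 0)
    {X Y : Finset A} (R : Tup dom (X ∪ Y) →₀ K)
    (hfd : SatisfiesFD R.support (X ∩ Y) (X \ Y) ∨ SatisfiesFD R.support (X ∩ Y) (Y \ X)) :
    KEquiv R (kjoin (marg Finset.subset_union_left R) (marg Finset.subset_union_right R)) := by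
  classical
  set S := marg (Finset.subset_union_right : Y ⊆ X ∪ Y) R with hS
  refine ⟨∏ v ∈ (marg (Finset.inter_subset_right : X ∩ Y ⊆ Y) S).support,
    marg (Finset.inter_subset_right : X ∩ Y ⊆ Y) S v, 1, ?_, one_ne_zero, ?_⟩
  · rw [Finset.prod_ne_zero_iff]
    intro v hv
    exact Finsupp.mem_support_iff.mp hv
  intro t
  rw [one_mul, kjoin_apply]
  by_cases ht : R t = 0
  · rw [ht, mul_zero]
    by_contra hne
    have h1 := left_ne_zero_of_mul (left_ne_zero_of_mul (Ne.symm hne))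
    have h2 := right_ne_zero_of_mul (left_ne_zero_of_mul (Ne.symm hne))
    obtain ⟨r, hr, hrt⟩ := exists_of_marg_ne_zero _ _ _ h1
    obtain ⟨s, hs, hst⟩ := exists_of_marg_ne_zero _ _ _ h2
    rw [restr_eq_iff] at hrt hst
    have hrs : agreeOn (X ∩ Y) r s := by
      intro a ha haZ
      rw [Finset.mem_inter] at haZ
      rw [hrt a ha haZ.1, hst a ha haZ.2]
    rcases hfd with hfd | hfd
    · have hd := hfd r hr s hs hrs
      have : s = t := by
        funext a ha
        by_cases haY : a ∈ Y
        · exact hst a ha haY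
        · have haX : a ∈ X := (Finset.mem_union.mp ha).resolve_right haY
          rw [← hd a ha (Finset.mem_sdiff.mpr ⟨haX, haY⟩), hrt a ha haX]
      exact Finsupp.mem_support_iff.mp hs (this ▸ ht)
    · have hd := hfd r hr s hs hrs
      have : r = t := by
        funext a ha
        by_cases haX : a ∈ X
        · exact hrt a ha haX
        · have haY : a ∈ Y := (Finset.mem_union.mp ha).resolve_left haX
          rw [hd a ha (Finset.mem_sdiff.mpr ⟨haY, haX⟩), hst a ha haY]
      exact Finsupp.mem_support_iff.mp hr (this ▸ ht)
  · have hts : t ∈ R.support := Finsupp.mem_support_iff.mpr ht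
    have hZ : marg (Finset.inter_subset_right : X ∩ Y ⊆ Y) S
        = marg (Finset.inter_subset_union : X ∩ Y ⊆ X ∪ Y) R := marg_marg _ _ _
    have hZne : marg (Finset.inter_subset_right : X ∩ Y ⊆ Y) S
        (restr dom Finset.inter_subset_union t) ≠ 0 := by
      rw [hZ]
      exact marg_ne_zero hplus _ _ _ ht
    rw [← mul_cFactor _ _ _ hZne]
    suffices h : marg (Finset.subset_union_left : X ⊆ X ∪ Y) R
          (restr dom Finset.subset_union_left t) *
        S (restr dom Finset.subset_union_right t) =
        R t * marg (Finset.inter_subset_right : X ∩ Y ⊆ Y) S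
          (restr dom Finset.inter_subset_union t) by
      rw [h]; ring
    rw [hZ, hS]
    rcases hfd with hfd | hfd
    · rw [marg_eq_self Finset.subset_union_right R t hts, mul_comm,
        marg_eq_marg Finset.subset_union_left Finset.inter_subset_union R t]
      · intro r hr
        rw [restr_eq_iff, restr_eq_iff]
        constructor
        · intro e a ha haZ
          exact e a ha (Finset.mem_inter.mp haZ).1
        · intro e a ha haX
          by_cases haY : a ∈ Y
          · exact e a ha (Finset.mem_inter.mpr ⟨haX, haY⟩)
          · exact hfd r hr t hts e a ha (Finset.mem_sdiff.mpr ⟨haX, haY⟩)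
      · intro r hr e
        rw [restr_eq_iff] at e
        funext a ha
        by_cases haY : a ∈ Y
        · exact e a ha haY
        · exact hfd r hr t hts (fun a ha haZ => e a ha (Finset.mem_inter.mp haZ).2) a ha
            (Finset.mem_sdiff.mpr ⟨(Finset.mem_union.mp ha).resolve_right haY, haY⟩)
    · rw [marg_eq_self Finset.subset_union_left R t hts,
        marg_eq_marg Finset.subset_union_right Finset.inter_subset_union R t]
      · intro r hr
        rw [restr_eq_iff, restr_eq_iff]
        constructor
        · intro e a ha haZ
          exact e a ha (Finset.mem_inter.mp haZ).2
        · intro e a ha haY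
          by_cases haX : a ∈ X
          · exact e a ha (Finset.mem_inter.mpr ⟨haX, haY⟩)
          · exact hfd r hr t hts e a ha (Finset.mem_sdiff.mpr ⟨haY, haX⟩)
      · intro r hr e
        rw [restr_eq_iff] at e
        funext a ha
        by_cases haX : a ∈ X
        · exact e a ha haX
        · exact hfd r hr t hts (fun a ha haZ => e a ha (Finset.mem_inter.mp haZ).1) a ha
            (Finset.mem_sdiff.mpr ⟨(Finset.mem_union.mp ha).resolve_left haX, haX⟩)

/-- The decomposition of every K-relation whose support satisfies the functional dependencies
in `F` along `X` and `Y` is lossless-join if and only if `F` logically implies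
`X ∩ Y → X ∖ Y` or `F` logically implies `X ∩ Y → Y ∖ X`. -/
theorem statement11 {A : Type*} [DecidableEq A] (dom : A → Type*) [∀ a : A, Nontrivial (dom a)]
    (K : Type*) [CommSemiring K] [Nontrivial K] [NoZeroDivisors K]
    (hplus : ∀ a b : K, a + b = 0 → a = 0 ∧ b = 0)
    (X Y : Finset A) (F : Set (Finset A × Finset A))
    (hF : ∀ fd ∈ F, fd.1 ⊆ X ∪ Y ∧ fd.2 ⊆ X ∪ Y) :
    ((∀ P : Finset (Tup dom (X ∪ Y)), (∀ fd ∈ F, SatisfiesFD P fd.1 fd.2) →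
        SatisfiesFD P (X ∩ Y) (X \ Y)) ∨
     (∀ P : Finset (Tup dom (X ∪ Y)), (∀ fd ∈ F, SatisfiesFD P fd.1 fd.2) →
        SatisfiesFD P (X ∩ Y) (Y \ X))) ↔
    (∀ R : Tup dom (X ∪ Y) →₀ K, (∀ fd ∈ F, SatisfiesFD R.support fd.1 fd.2) →
      KEquiv R (kjoin (marg Finset.subset_union_left R)
        (marg Finset.subset_union_right R))) := by
  classical
  constructor
  · intro h R hR
    exact lossless_of_fd hplus R (h.imp (fun h => h _ hR) (fun h => h _ hR))
  · intro h
    by_contra hcon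
    rw [not_or] at hcon
    obtain ⟨hc1, hc2⟩ := hcon
    let cl : A → Prop := fun a => ∀ P : Finset (Tup dom (X ∪ Y)),
      (∀ fd ∈ F, SatisfiesFD P fd.1 fd.2) → SatisfiesFD P (X ∩ Y) {a}
    have hclZ : ∀ a ∈ X ∩ Y, cl a := by
      intro a ha P _ t₁ _ t₂ _ e b hb hba
      rw [Finset.mem_singleton] at hba
      subst hba
      exact e b hb ha
    have hclF : ∀ fd ∈ F, (∀ a ∈ fd.1, cl a) → ∀ a ∈ fd.2, cl a := by
      intro fd hfd hV a ha P hP t₁ h₁ t₂ h₂ e b hb hba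
      rw [Finset.mem_singleton] at hba
      subst hba
      exact hP fd hfd t₁ h₁ t₂ h₂ (fun c hc hcV =>
        hV c hcV P hP t₁ h₁ t₂ h₂ e c hc (Finset.mem_singleton_self c)) b hb ha
    have hx : ∃ a ∈ X \ Y, ¬ cl a := by
      by_contra hne
      push Not at hne
      exact hc1 fun P hP t₁ h₁ t₂ h₂ e b hb hbW =>
        hne b hbW P hP t₁ h₁ t₂ h₂ e b hb (Finset.mem_singleton_self b)
    have hy : ∃ a ∈ Y \ X, ¬ cl a := by
      by_contra hne
      push Not at hne
      exact hc2 fun P hP t₁ h₁ t₂ h₂ e b hb hbW =>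
        hne b hbW P hP t₁ h₁ t₂ h₂ e b hb (Finset.mem_singleton_self b)
    obtain ⟨x, hxX, hxc⟩ := hx
    obtain ⟨y, hyY, hyc⟩ := hy
    rw [Finset.mem_sdiff] at hxX hyY
    have hpair : ∀ a : A, ∃ p q : dom a, p ≠ q := fun a => exists_pair_ne (dom a)
    choose f g hfg using hpair
    let t₁ : Tup dom (X ∪ Y) := fun a _ => f a
    let t₂ : Tup dom (X ∪ Y) := fun a _ => if cl a then f a else g a
    have hagree : ∀ a (ha : a ∈ X ∪ Y), t₁ a ha = t₂ a ha ↔ cl a := by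
      intro a ha
      by_cases hc : cl a
      · simp [t₁, t₂, hc]
      · simp [t₁, t₂, hc, hfg a]
    let R : Tup dom (X ∪ Y) →₀ K := Finsupp.indicator {t₁, t₂} (fun _ _ => 1)
    have hRne : ∀ t, R t ≠ 0 ↔ t = t₁ ∨ t = t₂ := by
      intro t
      by_cases ht : t = t₁ ∨ t = t₂
      · simp [R, Finsupp.indicator_apply, ht]
      · simp [R, Finsupp.indicator_apply, ht]
    have hRF : ∀ fd ∈ F, SatisfiesFD R.support fd.1 fd.2 := by
      intro fd hfd r hr s hs e
      rw [Finsupp.mem_support_iff, hRne] at hr hs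
      have key : agreeOn fd.1 t₁ t₂ → agreeOn fd.2 t₁ t₂ := by
        intro e a ha haW
        refine (hagree a ha).mpr (hclF fd hfd (fun b hb => ?_) a haW)
        have hbU := (hF fd hfd).1 hb
        exact (hagree b hbU).mp (e b hbU hb)
      rcases hr with rfl | rfl <;> rcases hs with rfl | rfl
      · exact fun _ _ _ => rfl
      · exact key e
      · exact fun a ha haW => (key (fun b hb hbV => (e b hb hbV).symm) a ha haW).symm
      · exact fun _ _ _ => rfl
    obtain ⟨a, b, -, hb, hab⟩ := h R hRF
    let t : Tup dom (X ∪ Y) := fun c hc => if c ∈ X then t₁ c hc else t₂ c hc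
    have htX : restr dom Finset.subset_union_left t
        = restr dom (Finset.subset_union_left : X ⊆ X ∪ Y) t₁ := by
      rw [restr_eq_iff]
      intro c hc hcX
      simp [t, hcX]
    have htY : restr dom Finset.subset_union_right t
        = restr dom (Finset.subset_union_right : Y ⊆ X ∪ Y) t₂ := by
      rw [restr_eq_iff]
      intro c hc hcY
      by_cases hcX : c ∈ X
      · have := (hagree c hc).mpr (hclZ c (Finset.mem_inter.mpr ⟨hcX, hcY⟩))
        simp [t, hcX, this]
      · simp [t, hcX]
    have hRt : R t = 0 := by
      by_contra hne
      rcases (hRne t).mp hne with e | e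
      · have hyU : y ∈ X ∪ Y := Finset.mem_union_right _ hyY.1
        have := congrFun (congrFun e y) hyU
        simp only [t, if_neg hyY.2] at this
        exact hyc ((hagree y hyU).mp this.symm)
      · have hxU : x ∈ X ∪ Y := Finset.mem_union_left _ hxX.1
        have := congrFun (congrFun e x) hxU
        simp only [t, if_pos hxX.1] at this
        exact hxc ((hagree x hxU).mp this)
    have h0 := hab t
    rw [hRt, mul_zero, kjoin_apply, htX, htY] at h0
    refine mul_ne_zero hb (mul_ne_zero (mul_ne_zero ?_ ?_) (cFactor_ne_zero _ _ _)) h0.symm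
    · exact marg_ne_zero hplus _ _ _ ((hRne t₁).mpr (Or.inl rfl))
    · exact marg_ne_zero hplus _ _ _ ((hRne t₂).mpr (Or.inr rfl))
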